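/- Under pluriclosed flow the generalized metric evolves by ∂ₜG = −S: if g: I×U → (n×n Hermitian positive-definite matrices) and β: I×U → (n×n antisymmetric matrices) are smooth, β(t,·) is a torsion potential for g(t,·) for every t, and the pluriclosed flow equations hold in coordinates, ∂ₜg_{ij̄} = −S^g_{ij̄} + T²_{ij̄} and ∂ₜβ_{ij} = Δ_gβ_{ij}, then the generalized metric G(t,z) := G(g(t,z), β(t,z)) satisfies ∂ₜG_{AB̄} = −S_{AB̄} at every point of I×U and for all indices A, B ∈ {1,…,2n}, where S_{AB̄} := Σ_{i,j} g^{j̄i}·Ω^G_{ij̄AB̄}. -/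

import Mathlib

open Matrix
open scoped ComplexOrder

noncomputable section

/-- Spatial Wirtinger derivative `∂ᵢ f = ½(∂f/∂xᵢ − i·∂f/∂yᵢ)` of `f : ℝ × ℂⁿ → ℂ`,
computed via the real Fréchet derivative in the spatial directions. -/
def wdP {n : ℕ} (i : Fin n) (f : ℝ × (Fin n → ℂ) → ℂ) (p : ℝ × (Fin n → ℂ)) : ℂ :=
  (fderiv ℝ f p (0, Pi.single i 1) - Complex.I * fderiv ℝ f p (0, Pi.single i Complex.I)) / 2

/-- Spatial conjugate Wirtinger derivative `∂_{ī} f = ½(∂f/∂xᵢ + i·∂f/∂yᵢ)`. -/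
def wdbP {n : ℕ} (i : Fin n) (f : ℝ × (Fin n → ℂ) → ℂ) (p : ℝ × (Fin n → ℂ)) : ℂ :=
  (fderiv ℝ f p (0, Pi.single i 1) + Complex.I * fderiv ℝ f p (0, Pi.single i Complex.I)) / 2

/-- Time derivative `∂ₜ f` of `f : ℝ × ℂⁿ → ℂ`. -/
def dtP {n : ℕ} (f : ℝ × (Fin n → ℂ) → ℂ) (p : ℝ × (Fin n → ℂ)) : ℂ :=
  fderiv ℝ f p (1, 0)

/-- Entrywise spatial Wirtinger derivative of a matrix-valued map. -/
def wdPM {n : ℕ} {ι κ : Type*} (i : Fin n) (A : ℝ × (Fin n → ℂ) → Matrix ι κ ℂ)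
    (p : ℝ × (Fin n → ℂ)) : Matrix ι κ ℂ :=
  Matrix.of fun a b => wdP i (fun q => A q a b) p

/-- Entrywise spatial conjugate Wirtinger derivative of a matrix-valued map. -/
def wdbPM {n : ℕ} {ι κ : Type*} (i : Fin n) (A : ℝ × (Fin n → ℂ) → Matrix ι κ ℂ)
    (p : ℝ × (Fin n → ℂ)) : Matrix ι κ ℂ :=
  Matrix.of fun a b => wdbP i (fun q => A q a b) p

/-- Entrywise time derivative of a matrix-valued map. -/
def dtPM {n : ℕ} {ι κ : Type*} (A : ℝ × (Fin n → ℂ) → Matrix ι κ ℂ)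
    (p : ℝ × (Fin n → ℂ)) : Matrix ι κ ℂ :=
  Matrix.of fun a b => dtP (fun q => A q a b) p

/-- The generalized metric associated to a Hermitian metric `g` and a `(2,0)`-form
(antisymmetric matrix) `β`, as a `2n × 2n` block matrix on `T ⊕ T*`. -/
def genMetric {n : ℕ} (g β : Matrix (Fin n) (Fin n) ℂ) :
    Matrix (Fin n ⊕ Fin n) (Fin n ⊕ Fin n) ℂ :=
  Matrix.fromBlocks (g + β * (g⁻¹).map (starRingEnd ℂ) * βᴴ) (β * (g⁻¹).map (starRingEnd ℂ))
    ((g⁻¹).map (starRingEnd ℂ) * βᴴ) ((g⁻¹).map (starRingEnd ℂ))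

/-- Lowered Chern curvature `Ω^h_{ij̄αβ̄} = −∂ᵢ∂_{j̄}h_{αβ̄} + Σ ∂ᵢh_{αγ̄}·h^{γ̄δ}·∂_{j̄}h_{δβ̄}`
of a (time-dependent) Hermitian matrix field `h`, where `h^{γ̄δ} = (h⁻¹) γ δ`. -/
def chernP {n : ℕ} {ι : Type*} [Fintype ι] [DecidableEq ι]
    (h : ℝ × (Fin n → ℂ) → Matrix ι ι ℂ) (i j : Fin n) (a b : ι) (p : ℝ × (Fin n → ℂ)) : ℂ :=
  - wdP i (fun q => wdbP j (fun r => h r a b) q) p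
    + ∑ c : ι, ∑ d : ι, wdP i (fun q => h q a c) p * (h p)⁻¹ c d * wdbP j (fun q => h q d b) p

/-- Chern torsion `T_{ijk̄} = ∂ᵢ g_{jk̄} − ∂ⱼ g_{ik̄}`. -/
def torsionP {n : ℕ} (g : ℝ × (Fin n → ℂ) → Matrix (Fin n) (Fin n) ℂ)
    (i j k : Fin n) (p : ℝ × (Fin n → ℂ)) : ℂ :=
  wdP i (fun q => g q j k) p - wdP j (fun q => g q i k) p

/-- Trace with respect to `g` of the lowered Chern curvature of `h`:
`Σ g^{j̄i}·Ω^h_{ij̄ab̄}`. -/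
def traceChernP {n : ℕ} {ι : Type*} [Fintype ι] [DecidableEq ι]
    (g : ℝ × (Fin n → ℂ) → Matrix (Fin n) (Fin n) ℂ)
    (h : ℝ × (Fin n → ℂ) → Matrix ι ι ℂ) (a b : ι) (p : ℝ × (Fin n → ℂ)) : ℂ :=
  ∑ i : Fin n, ∑ j : Fin n, (g p)⁻¹ j i * chernP h i j a b p

/-- `T²_{ab̄} = Σ T_{aln̄}·conj(T_{bkm̄})·g^{k̄l}·g^{n̄m}`. -/
def torsionSqP {n : ℕ} (g : ℝ × (Fin n → ℂ) → Matrix (Fin n) (Fin n) ℂ)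
    (a b : Fin n) (p : ℝ × (Fin n → ℂ)) : ℂ :=
  ∑ k : Fin n, ∑ l : Fin n, ∑ m : Fin n, ∑ m' : Fin n,
    torsionP g a l m' p * (starRingEnd ℂ) (torsionP g b k m p) * (g p)⁻¹ k l * (g p)⁻¹ m' m

/-- Second Chern covariant derivative
`∇ᵢ∇_{j̄}β_{ab} = ∂ᵢ∂_{j̄}β_{ab} − Σ g^{k̄l}·∂ᵢg_{ak̄}·∂_{j̄}β_{lb} − Σ g^{k̄l}·∂ᵢg_{bk̄}·∂_{j̄}β_{al}`. -/
def nabla2betaP {n : ℕ} (g β : ℝ × (Fin n → ℂ) → Matrix (Fin n) (Fin n) ℂ)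
    (i j a b : Fin n) (p : ℝ × (Fin n → ℂ)) : ℂ :=
  wdP i (fun q => wdbP j (fun r => β r a b) q) p
    - ∑ k : Fin n, ∑ l : Fin n,
        (g p)⁻¹ k l * wdP i (fun q => g q a k) p * wdbP j (fun q => β q l b) p
    - ∑ k : Fin n, ∑ l : Fin n,
        (g p)⁻¹ k l * wdP i (fun q => g q b k) p * wdbP j (fun q => β q a l) p

/-- `Δ_g β_{ab} = Σ g^{j̄i}·∇ᵢ∇_{j̄}β_{ab}`. -/
def lapBetaP {n : ℕ} (g β : ℝ × (Fin n → ℂ) → Matrix (Fin n) (Fin n) ℂ)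
    (a b : Fin n) (p : ℝ × (Fin n → ℂ)) : ℂ :=
  ∑ i : Fin n, ∑ j : Fin n, (g p)⁻¹ j i * nabla2betaP g β i j a b p

/-!
Write `G = L D L*`, where `D = diag(g, g⁻ᵀ)` and `L = [[1, β], [0, 1]]` is the `B`-transform by `β`.
Then `∂_ξ G = L a_ξ L⁻¹ G`, where `a_ξ` has diagonal blocks `θ_ξ = ∂_ξ g · g⁻¹` and `-θ_ξᵀ`, upper
right block `∂_ξ β`, and lower left block the `g`-dual of `∂_ξ̄ β`. Differentiating the Chern
connection form `L a_ξ L⁻¹` of `G` gives `Ω^G(ξ, η) = -L c L⁻¹ G` with `c` of the same shape, now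
built from `(∂_η β · g⁻ᵀ · (∂_ξ̄ β)* - Ω^g(ξ, η)) g⁻¹` and `∇_ξ ∂_η β`. Hence `∂ₜG = -S` amounts to
`a_t` being the trace of `c` over `ξ = ∂ᵢ`, `η = ∂_{j̄}`; block by block these are the two flow
equations, because `∂_{k̄} β_{ij}` is the torsion.
-/

section ComplexDerivative

open scoped Topology

/-- The conjugate `v - i·w` of the complexified tangent vector `v + i·w`, encoded as a pair. -/
def conjVec {E : Type*} [Neg E] (ξ : E × E) : E × E := (ξ.1, -ξ.2)

lemma conjVec_conjVec {E : Type*} [InvolutiveNeg E] (ξ : E × E) : conjVec (conjVec ξ) = ξ := by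
  simp [conjVec]

variable {E : Type*} [NormedAddCommGroup E] [NormedSpace ℝ E]
variable {V : Type*} [NormedAddCommGroup V] [NormedSpace ℂ V]

/-- The derivative of `f` along the complexified tangent vector `v + i·w ∈ E ⊗ ℂ`, encoded as the
pair `ξ = (v, w)`. The time derivative and both Wirtinger derivatives are of this form. -/
def cderiv (ξ : E × E) (f : E → V) (p : E) : V :=
  fderiv ℝ f p ξ.1 + Complex.I • fderiv ℝ f p ξ.2

variable {p : E} (ξ η : E × E)

lemma cderiv_congr {f₁ f₂ : E → V} (h : f₁ =ᶠ[𝓝 p] f₂) : cderiv ξ f₁ p = cderiv ξ f₂ p := by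
  simp only [cderiv, h.fderiv_eq]

lemma cderiv_const (c : V) : cderiv ξ (fun _ => c) p = 0 := by
  simp [cderiv]

lemma cderiv_neg (f : E → V) : cderiv ξ (fun q => -f q) p = -cderiv ξ f p := by
  simp [cderiv, fderiv_fun_neg, add_comm]

lemma cderiv_clm_comp {W : Type*} [NormedAddCommGroup W] [NormedSpace ℂ W] (L : V →L[ℂ] W)
    {f : E → V} (hf : DifferentiableAt ℝ f p) :
    cderiv ξ (fun q => L (f q)) p = L (cderiv ξ f p) := by
  have h : HasFDerivAt (fun q => L (f q)) ((L.restrictScalars ℝ).comp (fderiv ℝ f p)) p :=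
    (L.restrictScalars ℝ).hasFDerivAt.comp p hf.hasFDerivAt
  simp [cderiv, h.fderiv]

lemma cderiv_star [StarAddMonoid V] [StarModule ℂ V] [ContinuousStar V] (f : E → V) :
    cderiv ξ (fun q => star (f q)) p = star (cderiv (conjVec ξ) f p) := by
  simp [cderiv, conjVec, fderiv_star]

lemma cderiv_mul {𝔸 : Type*} [NormedRing 𝔸] [NormedAlgebra ℂ 𝔸] {f₁ f₂ : E → 𝔸}
    (h₁ : DifferentiableAt ℝ f₁ p) (h₂ : DifferentiableAt ℝ f₂ p) :
    cderiv ξ (fun q => f₁ q * f₂ q) p = cderiv ξ f₁ p * f₂ p + f₁ p * cderiv ξ f₂ p := by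
  simp only [cderiv, fderiv_fun_mul' h₁ h₂, _root_.add_apply, _root_.smul_apply, smul_eq_mul,
    MulOpposite.smul_eq_mul_unop, MulOpposite.unop_op, smul_add, mul_add, add_mul,
    Algebra.mul_smul_comm, Algebra.smul_mul_assoc]
  abel

lemma cderiv_ringInverse {𝔸 : Type*} [NormedRing 𝔸] [NormedAlgebra ℂ 𝔸] [CompleteSpace 𝔸]
    {f : E → 𝔸} (hf : DifferentiableAt ℝ f p) (hu : IsUnit (f p)) :
    cderiv ξ (fun q => Ring.inverse (f q)) p =
      -(Ring.inverse (f p) * cderiv ξ f p * Ring.inverse (f p)) := by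
  obtain ⟨u, hu⟩ := hu
  have h := (hu ▸ hasFDerivAt_ringInverse (𝕜 := ℝ) u).comp p hf.hasFDerivAt
  have h' : fderiv ℝ (fun q => Ring.inverse (f q)) p = _ := h.fderiv
  simp [cderiv, h', ← hu, mul_add, add_mul, add_comm]

lemma differentiableAt_fderiv {f : E → V} (hf : ContDiffAt ℝ 2 f p) :
    DifferentiableAt ℝ (fderiv ℝ f) p :=
  (hf.fderiv_right (m := 1) (by norm_num)).differentiableAt one_ne_zero

lemma differentiableAt_cderiv {f : E → V} (hf : ContDiffAt ℝ 2 f p) :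
    DifferentiableAt ℝ (cderiv ξ f) p := by
  have h (v : E) := (differentiableAt_fderiv hf).clm_apply (differentiableAt_const v)
  exact (h ξ.1).add ((h ξ.2).const_smul Complex.I)

lemma fderiv_cderiv {f : E → V} (hf : DifferentiableAt ℝ (fderiv ℝ f) p) (v : E) :
    fderiv ℝ (cderiv ξ f) p v =
      fderiv ℝ (fderiv ℝ f) p v ξ.1 + Complex.I • fderiv ℝ (fderiv ℝ f) p v ξ.2 := by
  have h (w : E) : HasFDerivAt (fun q => fderiv ℝ f q w) ((fderiv ℝ (fderiv ℝ f) p).flip w) p := by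
    simpa using hf.hasFDerivAt.clm_apply (hasFDerivAt_const w p)
  have h' : fderiv ℝ (cderiv ξ f) p = _ := ((h ξ.1).add ((h ξ.2).const_smul Complex.I)).fderiv
  simp [h']

lemma cderiv_comm {f : E → V} (hf : ContDiffAt ℝ 2 f p) :
    cderiv ξ (cderiv η f) p = cderiv η (cderiv ξ f) p := by
  have hsymm : IsSymmSndFDerivAt ℝ f p := hf.isSymmSndFDerivAt (by simp)
  rw [cderiv, cderiv]
  simp only [fderiv_cderiv _ (differentiableAt_fderiv hf), smul_add]
  rw [hsymm.eq ξ.1 η.1, hsymm.eq ξ.1 η.2, hsymm.eq ξ.2 η.1, hsymm.eq ξ.2 η.2]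
  abel

end ComplexDerivative

section MatrixCalculus

open scoped Topology Matrix.Norms.L2Operator

variable {E : Type*} [NormedAddCommGroup E] [NormedSpace ℝ E] {p : E}

section Differentiability

variable {m k : Type*} [Finite m] [Finite k]

lemma differentiableAt_matrix_iff {A : E → Matrix m k ℂ} :
    DifferentiableAt ℝ A p ↔ ∀ a b, DifferentiableAt ℝ (fun q => A q a b) p := by
  classical
  have := Fintype.ofFinite m
  have := Fintype.ofFinite k
  let e : Matrix m k ℂ ≃L[ℝ] (m → k → ℂ) := (Matrix.ofLinearEquiv ℝ).symm.toContinuousLinearEquiv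
  rw [← e.comp_differentiableAt_iff, differentiableAt_pi]
  simp only [differentiableAt_pi]
  rfl

lemma differentiableAt_transpose {A : E → Matrix m k ℂ} (hA : DifferentiableAt ℝ A p) :
    DifferentiableAt ℝ (fun q => (A q)ᵀ) p :=
  differentiableAt_matrix_iff.2 fun a b => differentiableAt_matrix_iff.1 hA b a

lemma differentiableAt_fromBlocks {A B C D : E → Matrix m m ℂ}
    (hA : DifferentiableAt ℝ A p) (hB : DifferentiableAt ℝ B p) (hC : DifferentiableAt ℝ C p)
    (hD : DifferentiableAt ℝ D p) :
    DifferentiableAt ℝ (fun q => fromBlocks (A q) (B q) (C q) (D q)) p := by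
  rw [differentiableAt_matrix_iff] at *
  rintro (a | a) (b | b)
  exacts [hA a b, hB a b, hC a b, hD a b]

end Differentiability

variable (ξ η : E × E) {m : Type*} [Fintype m] [DecidableEq m]

lemma contDiffAt_matrix_iff {A : E → Matrix m m ℂ} {k : WithTop ℕ∞} :
    ContDiffAt ℝ k A p ↔ ∀ a b, ContDiffAt ℝ k (fun q => A q a b) p := by
  let e : Matrix m m ℂ ≃L[ℝ] (m → m → ℂ) := (Matrix.ofLinearEquiv ℝ).symm.toContinuousLinearEquiv
  rw [← e.comp_contDiffAt_iff, contDiffAt_pi]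
  simp only [contDiffAt_pi]
  rfl

lemma cderiv_matrix_apply {A : E → Matrix m m ℂ} (hA : DifferentiableAt ℝ A p) (a b : m) :
    cderiv ξ A p a b = cderiv ξ (fun q => A q a b) p :=
  (cderiv_clm_comp ξ (Matrix.entryLinearMap ℂ ℂ a b).toContinuousLinearMap hA).symm

lemma cderiv_cderiv_matrix_apply {A : E → Matrix m m ℂ} (hA : ContDiffAt ℝ 2 A p) (a b : m) :
    cderiv ξ (cderiv η A) p a b = cderiv ξ (cderiv η fun q => A q a b) p := by
  rw [cderiv_matrix_apply ξ (differentiableAt_cderiv η hA)]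
  refine cderiv_congr ξ ((hA.eventually (by simp)).mono fun q hq => ?_)
  exact cderiv_matrix_apply η (hq.differentiableAt two_ne_zero) a b

lemma cderiv_transpose {A : E → Matrix m m ℂ} (hA : DifferentiableAt ℝ A p) :
    cderiv ξ (fun q => (A q)ᵀ) p = (cderiv ξ A p)ᵀ := by
  ext a b
  rw [cderiv_matrix_apply ξ (differentiableAt_transpose hA), Matrix.transpose_apply,
    cderiv_matrix_apply ξ hA]
  rfl

lemma cderiv_conjTranspose (A : E → Matrix m m ℂ) :
    cderiv ξ (fun q => (A q)ᴴ) p = (cderiv (conjVec ξ) A p)ᴴ :=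
  cderiv_star ξ A

lemma cderiv_conjVec_of_isHermitian {A : E → Matrix m m ℂ} (hA : ∀ᶠ q in 𝓝 p, (A q).IsHermitian) :
    cderiv (conjVec ξ) A p = (cderiv ξ A p)ᴴ := by
  rw [cderiv_congr (conjVec ξ) (hA.mono fun q hq => hq.eq.symm), cderiv_conjTranspose,
    conjVec_conjVec]

lemma cderiv_transpose_eq_neg {A : E → Matrix m m ℂ} (hA : DifferentiableAt ℝ A p)
    (h : ∀ᶠ q in 𝓝 p, (A q)ᵀ = -A q) : (cderiv ξ A p)ᵀ = -cderiv ξ A p := by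
  rw [← cderiv_transpose ξ hA, cderiv_congr ξ h, cderiv_neg]

lemma contDiffAt_matrix_inv {A : E → Matrix m m ℂ} {k : WithTop ℕ∞} (hA : ContDiffAt ℝ k A p)
    (hu : IsUnit (A p)) : ContDiffAt ℝ k (fun q => (A q)⁻¹) p := by
  obtain ⟨u, hu⟩ := hu
  simp only [Matrix.nonsing_inv_eq_ringInverse]
  exact (hu ▸ contDiffAt_ringInverse ℝ u).comp p hA

lemma differentiableAt_matrix_inv {A : E → Matrix m m ℂ} (hA : DifferentiableAt ℝ A p)
    (hu : IsUnit (A p)) : DifferentiableAt ℝ (fun q => (A q)⁻¹) p := by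
  obtain ⟨u, hu⟩ := hu
  simp only [Matrix.nonsing_inv_eq_ringInverse]
  exact (hu ▸ (hasFDerivAt_ringInverse (𝕜 := ℝ) u).differentiableAt).comp p hA

lemma cderiv_matrix_inv {A : E → Matrix m m ℂ} (hA : DifferentiableAt ℝ A p)
    (hu : IsUnit (A p)) :
    cderiv ξ (fun q => (A q)⁻¹) p = -((A p)⁻¹ * cderiv ξ A p * (A p)⁻¹) := by
  simp only [Matrix.nonsing_inv_eq_ringInverse]
  exact cderiv_ringInverse ξ hA hu

lemma contDiffAt_fromBlocks {A B C D : E → Matrix m m ℂ} {k : WithTop ℕ∞}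
    (hA : ContDiffAt ℝ k A p) (hB : ContDiffAt ℝ k B p) (hC : ContDiffAt ℝ k C p)
    (hD : ContDiffAt ℝ k D p) :
    ContDiffAt ℝ k (fun q => fromBlocks (A q) (B q) (C q) (D q)) p := by
  rw [contDiffAt_matrix_iff] at *
  rintro (a | a) (b | b)
  exacts [hA a b, hB a b, hC a b, hD a b]

lemma cderiv_fromBlocks {A B C D : E → Matrix m m ℂ}
    (hA : DifferentiableAt ℝ A p) (hB : DifferentiableAt ℝ B p) (hC : DifferentiableAt ℝ C p)
    (hD : DifferentiableAt ℝ D p) :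
    cderiv ξ (fun q => fromBlocks (A q) (B q) (C q) (D q)) p =
      fromBlocks (cderiv ξ A p) (cderiv ξ B p) (cderiv ξ C p) (cderiv ξ D p) := by
  ext a b
  rw [cderiv_matrix_apply ξ (differentiableAt_fromBlocks hA hB hC hD)]
  rcases a with a | a <;> rcases b with b | b
  exacts [(cderiv_matrix_apply ξ hA a b).symm, (cderiv_matrix_apply ξ hB a b).symm,
    (cderiv_matrix_apply ξ hC a b).symm, (cderiv_matrix_apply ξ hD a b).symm]

end MatrixCalculus

section ChernCurvature

open scoped Topology Matrix.Norms.L2Operator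

lemma eventually_isUnit {X R : Type*} [TopologicalSpace X] [NormedRing R] [CompleteSpace R]
    {f : X → R} {x : X} (hf : ContinuousAt f x) (hu : IsUnit (f x)) : ∀ᶠ y in 𝓝 x, IsUnit (f y) :=
  hf (Units.isOpen.mem_nhds hu)

variable {E : Type*} [NormedAddCommGroup E] [NormedSpace ℝ E] {p : E} (ξ η : E × E)
variable {m : Type*} [Fintype m] [DecidableEq m]

/-- The lowered Chern curvature `Ω^h(ξ, η) = -∂_ξ ∂_η h + ∂_ξ h · h⁻¹ · ∂_η h` of a matrix field,
along arbitrary complexified tangent vectors; `chernP h i j` is the case `ξ = ∂ᵢ`, `η = ∂_{j̄}`. -/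
def chernCurvature (h : E → Matrix m m ℂ) (p : E) : Matrix m m ℂ :=
  -cderiv ξ (cderiv η h) p + cderiv ξ h p * (h p)⁻¹ * cderiv η h p

/-- The Chern connection matrix `∂_ξ g · g⁻¹`. -/
def chernForm (g : E → Matrix m m ℂ) (p : E) : Matrix m m ℂ :=
  cderiv ξ g p * (g p)⁻¹

/-- The Chern covariant derivative `∂_ξ Z - θ_ξ Z - Z θ_ξᵀ` of a bilinear form `Z` on `T^{1,0}`,
where `θ_ξ` is the connection matrix `chernForm ξ g`. -/
def covDeriv (g Z : E → Matrix m m ℂ) (p : E) : Matrix m m ℂ :=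
  cderiv ξ Z p - chernForm ξ g p * Z p - Z p * (chernForm ξ g p)ᵀ

variable {g : E → Matrix m m ℂ}

lemma chernForm_mul (hu : IsUnit (g p)) : chernForm ξ g p * g p = cderiv ξ g p :=
  Matrix.nonsing_inv_mul_cancel_right _ _ ((Matrix.isUnit_iff_isUnit_det _).1 hu)

lemma differentiableAt_chernForm (hg : ContDiffAt ℝ 2 g p) (hu : IsUnit (g p)) :
    DifferentiableAt ℝ (chernForm ξ g) p :=
  (differentiableAt_cderiv ξ hg).mul
    (differentiableAt_matrix_inv (hg.differentiableAt two_ne_zero) hu)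

lemma chernCurvature_eq_neg_cderiv_chernForm_mul (hg : ContDiffAt ℝ 2 g p) (hu : IsUnit (g p)) :
    chernCurvature ξ η g p = -(cderiv η (chernForm ξ g) p * g p) := by
  have hmixed : cderiv ξ (cderiv η g) p =
      cderiv η (chernForm ξ g) p * g p + chernForm ξ g p * cderiv η g p := by
    have hev := (eventually_isUnit hg.continuousAt hu).mono fun q hq => (chernForm_mul ξ hq).symm
    rw [cderiv_comm ξ η hg, cderiv_congr η hev,
      cderiv_mul η (differentiableAt_chernForm ξ hg hu) (hg.differentiableAt two_ne_zero)]
  rw [chernCurvature, hmixed, chernForm]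
  abel

lemma cderiv_chernForm (hg : ContDiffAt ℝ 2 g p) (hu : IsUnit (g p)) :
    cderiv η (chernForm ξ g) p = -(chernCurvature ξ η g p * (g p)⁻¹) := by
  rw [chernCurvature_eq_neg_cderiv_chernForm_mul ξ η hg hu, Matrix.neg_mul, neg_neg,
    Matrix.mul_nonsing_inv_cancel_right _ _ ((Matrix.isUnit_iff_isUnit_det _).1 hu)]

lemma cderiv_raise {Z : E → Matrix m m ℂ} (hg : DifferentiableAt ℝ g p) (hu : IsUnit (g p))
    (hherm : ∀ᶠ q in 𝓝 p, (g q).IsHermitian) (hZ : DifferentiableAt ℝ Z p) :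
    cderiv η (fun q => (g q)⁻¹ᵀ * (Z q)ᴴ * (g q)⁻¹) p =
      (g p)⁻¹ᵀ * (covDeriv (conjVec η) g Z p)ᴴ * (g p)⁻¹ := by
  have hinv := differentiableAt_matrix_inv hg hu
  have hinvT := differentiableAt_transpose hinv
  have hZs : DifferentiableAt ℝ (fun q => (Z q)ᴴ) p := hZ.star
  have hgη : cderiv η g p = (cderiv (conjVec η) g p)ᴴ := by
    rw [cderiv_conjVec_of_isHermitian η hherm, conjTranspose_conjTranspose]
  have hK : (g p)⁻¹ᴴ = (g p)⁻¹ := hherm.self_of_nhds.inv.eq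
  have hKT : (g p)⁻¹ᵀᴴ = (g p)⁻¹ᵀ := congrArg Matrix.transpose hK
  have hT (A : Matrix m m ℂ) : Aᴴᵀ = Aᵀᴴ := rfl
  rw [cderiv_mul η (hinvT.fun_mul hZs) hinv, cderiv_mul η hinvT hZs, cderiv_conjTranspose,
    cderiv_transpose η hinv, cderiv_matrix_inv η hg hu, hgη]
  simp only [covDeriv, chernForm, conjTranspose_sub, conjTranspose_mul, transpose_mul,
    transpose_neg, hK, hKT, hT]
  noncomm_ring

end ChernCurvature

section GeneralizedMetric

open scoped Topology Matrix.Norms.L2Operator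

section Algebra

variable {m : Type*} [Fintype m] [DecidableEq m]

/-- The `B`-transform of `T ⊕ T*` by a `(2,0)`-form `b`, i.e. the shear `[[1, b], [0, 1]]`. -/
def bTransform (b : Matrix m m ℂ) : Matrix (m ⊕ m) (m ⊕ m) ℂ :=
  fromBlocks 1 b 0 1

/-- The infinitesimal `B`-transform `[[0, b], [0, 0]]`, the derivative of `bTransform` along `b`. -/
def infBTransform (b : Matrix m m ℂ) : Matrix (m ⊕ m) (m ⊕ m) ℂ :=
  fromBlocks 0 b 0 0

/-- The endomorphism `[[X, Y], [g⁻ᵀ Z* g⁻¹, -Xᵀ]]` of `T ⊕ T*`, which is infinitesimally orthogonal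
for the duality pairing when `Y` and `Z` are skew. Up to a `B`-transform, the connection and the
curvature of the generalized metric are of this form. -/
def genEndo (g X Y Z : Matrix m m ℂ) : Matrix (m ⊕ m) (m ⊕ m) ℂ :=
  fromBlocks X Y (g⁻¹ᵀ * Zᴴ * g⁻¹) (-Xᵀ)

lemma bTransform_mul_bTransform_neg (b : Matrix m m ℂ) : bTransform b * bTransform (-b) = 1 := by
  simp [bTransform, fromBlocks_multiply]

lemma bTransform_neg_mul_bTransform (b : Matrix m m ℂ) : bTransform (-b) * bTransform b = 1 := by
  simpa using bTransform_mul_bTransform_neg (-b)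

lemma isUnit_bTransform (b : Matrix m m ℂ) : IsUnit (bTransform b) :=
  ⟨⟨_, _, bTransform_mul_bTransform_neg b, bTransform_neg_mul_bTransform b⟩, rfl⟩

lemma bTransform_mul_infBTransform (b Y : Matrix m m ℂ) :
    bTransform b * infBTransform Y = infBTransform Y := by
  simp [bTransform, infBTransform, fromBlocks_multiply]

lemma infBTransform_mul_bTransform (b Y : Matrix m m ℂ) :
    infBTransform Y * bTransform b = infBTransform Y := by
  simp [bTransform, infBTransform, fromBlocks_multiply]

variable {n : ℕ} {g : Matrix (Fin n) (Fin n) ℂ} (β : Matrix (Fin n) (Fin n) ℂ)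

lemma genMetric_eq_bTransform_mul (hg : g.IsHermitian) :
    genMetric g β = bTransform β * fromBlocks g 0 0 g⁻¹ᵀ * (bTransform β)ᴴ := by
  have hconj : g⁻¹.map (starRingEnd ℂ) = g⁻¹ᵀ := congrArg transpose hg.inv.eq
  simp [genMetric, bTransform, fromBlocks_multiply, fromBlocks_conjTranspose, hconj]

lemma isUnit_genMetric (hg : g.IsHermitian) (hu : IsUnit g) : IsUnit (genMetric g β) := by
  have hdiag : IsUnit (fromBlocks g 0 0 g⁻¹ᵀ) := by
    rw [isUnit_fromBlocks_zero₁₂]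
    exact ⟨hu, by simpa [Matrix.isUnit_transpose] using hu⟩
  rw [genMetric_eq_bTransform_mul β hg]
  exact ((isUnit_bTransform β).mul hdiag).mul (isUnit_bTransform β).star

end Algebra

variable {E : Type*} [NormedAddCommGroup E] [NormedSpace ℝ E] {p : E} (ξ η : E × E)

section BTransform

lemma differentiableAt_bTransform {m : Type*} [Finite m] [DecidableEq m] {b : E → Matrix m m ℂ}
    (hb : DifferentiableAt ℝ b p) : DifferentiableAt ℝ (fun q => bTransform (b q)) p :=
  differentiableAt_fromBlocks (differentiableAt_const _) hb (differentiableAt_const _)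
    (differentiableAt_const _)

variable {m : Type*} [Fintype m] [DecidableEq m] {b : E → Matrix m m ℂ}

lemma cderiv_bTransform (hb : DifferentiableAt ℝ b p) :
    cderiv ξ (fun q => bTransform (b q)) p = infBTransform (cderiv ξ b p) := by
  unfold bTransform
  rw [cderiv_fromBlocks ξ (differentiableAt_const _) hb (differentiableAt_const _)
    (differentiableAt_const _)]
  simp only [cderiv_const, infBTransform]

lemma cderiv_bTransform_conj {a : E → Matrix (m ⊕ m) (m ⊕ m) ℂ} (hb : DifferentiableAt ℝ b p)
    (ha : DifferentiableAt ℝ a p) :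
    cderiv ξ (fun q => bTransform (b q) * a q * bTransform (-b q)) p =
      bTransform (b p) * (cderiv ξ a p + infBTransform (cderiv ξ b p) * a p
        - a p * infBTransform (cderiv ξ b p)) * bTransform (-b p) := by
  have hL := differentiableAt_bTransform hb
  have hL' := differentiableAt_bTransform (b := fun q => -b q) hb.neg
  have hleft := bTransform_mul_infBTransform (b p) (cderiv ξ b p)
  have hright := infBTransform_mul_bTransform (-b p) (cderiv ξ b p)
  have hneg : infBTransform (-cderiv ξ b p) = -infBTransform (cderiv ξ b p) := by
    simp [infBTransform, fromBlocks_neg]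
  rw [cderiv_mul ξ (hL.fun_mul ha) hL', cderiv_mul ξ hL ha, cderiv_bTransform ξ hb,
    cderiv_bTransform ξ (b := fun q => -b q) hb.neg, cderiv_neg, hneg]
  calc
    _ = bTransform (b p) * infBTransform (cderiv ξ b p) * a p * bTransform (-b p)
        + bTransform (b p) * cderiv ξ a p * bTransform (-b p)
        - bTransform (b p) * a p * (infBTransform (cderiv ξ b p) * bTransform (-b p)) := by
      rw [hleft, hright]
      noncomm_ring
    _ = _ := by noncomm_ring

end BTransform

variable {n : ℕ} {g β : E → Matrix (Fin n) (Fin n) ℂ}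

/-- The Chern connection form of the generalized metric along `ξ`, in the `B`-transformed frame. -/
def genConnection (g β : E → Matrix (Fin n) (Fin n) ℂ) (p : E) :
    Matrix (Fin n ⊕ Fin n) (Fin n ⊕ Fin n) ℂ :=
  genEndo (g p) (chernForm ξ g p) (cderiv ξ β p) (cderiv (conjVec ξ) β p)

/-- Minus the Chern curvature endomorphism `Ω^G(ξ, η) G⁻¹` of the generalized metric `G`, in the
`B`-transformed frame. -/
def genCurvature (g β : E → Matrix (Fin n) (Fin n) ℂ) (p : E) :
    Matrix (Fin n ⊕ Fin n) (Fin n ⊕ Fin n) ℂ :=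
  genEndo (g p)
    ((cderiv η β p * (g p)⁻¹ᵀ * (cderiv (conjVec ξ) β p)ᴴ - chernCurvature ξ η g p) * (g p)⁻¹)
    (covDeriv ξ g (cderiv η β) p) (covDeriv (conjVec η) g (cderiv (conjVec ξ) β) p)

lemma contDiffAt_genMetric {k : WithTop ℕ∞} (hg : ContDiffAt ℝ k g p) (hβ : ContDiffAt ℝ k β p)
    (hu : IsUnit (g p)) : ContDiffAt ℝ k (fun q => genMetric (g q) (β q)) p := by
  have hinv := contDiffAt_matrix_iff.1 (contDiffAt_matrix_inv hg hu)
  have hconj : ContDiffAt ℝ k (fun q => (g q)⁻¹.map (starRingEnd ℂ)) p :=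
    contDiffAt_matrix_iff.2 fun a b => (starL' ℝ).contDiff.contDiffAt.comp p (hinv a b)
  have hβs : ContDiffAt ℝ k (fun q => (β q)ᴴ) p := (starL' ℝ).contDiff.contDiffAt.comp p hβ
  exact contDiffAt_fromBlocks (hg.add ((hβ.mul hconj).mul hβs)) (hβ.mul hconj)
    (hconj.mul hβs) hconj

lemma cderiv_fromBlocks_diagonal_add (hg : DifferentiableAt ℝ g p) (hu : IsUnit (g p))
    (Y Z : Matrix (Fin n) (Fin n) ℂ) :
    cderiv ξ (fun q => fromBlocks (g q) 0 0 (g q)⁻¹ᵀ) p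
      + infBTransform Y * fromBlocks (g p) 0 0 (g p)⁻¹ᵀ
      + fromBlocks (g p) 0 0 (g p)⁻¹ᵀ * (infBTransform Z)ᴴ =
      genEndo (g p) (chernForm ξ g p) Y Z * fromBlocks (g p) 0 0 (g p)⁻¹ᵀ := by
  have hinv := differentiableAt_matrix_inv hg hu
  have hzero : DifferentiableAt ℝ (fun _ : E => (0 : Matrix (Fin n) (Fin n) ℂ)) p :=
    differentiableAt_const 0
  have hinvT : cderiv ξ (fun q => (g q)⁻¹ᵀ) p = -((chernForm ξ g p)ᵀ * (g p)⁻¹ᵀ) := by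
    rw [cderiv_transpose ξ hinv, cderiv_matrix_inv ξ hg hu, chernForm, ← transpose_mul,
      transpose_neg, mul_assoc]
  have hcancel : (g p)⁻¹ * g p = 1 := nonsing_inv_mul _ ((isUnit_iff_isUnit_det _).1 hu)
  rw [cderiv_fromBlocks ξ hg hzero hzero (differentiableAt_transpose hinv), hinvT, cderiv_const,
    ← chernForm_mul ξ hu]
  simp [genEndo, infBTransform, fromBlocks_multiply, fromBlocks_conjTranspose, fromBlocks_add,
    mul_assoc, hcancel]

lemma cderiv_genMetric (hg : DifferentiableAt ℝ g p) (hβ : DifferentiableAt ℝ β p)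
    (hherm : ∀ᶠ q in 𝓝 p, (g q).IsHermitian) (hu : IsUnit (g p)) :
    cderiv ξ (fun q => genMetric (g q) (β q)) p =
      bTransform (β p) * genConnection ξ g β p * bTransform (-β p) * genMetric (g p) (β p) := by
  set Y := infBTransform (cderiv ξ β p)
  set Z := infBTransform (cderiv (conjVec ξ) β p)
  set L := bTransform (β p)
  set D := fromBlocks (g p) 0 0 (g p)⁻¹ᵀ
  have hY : L * Y = Y := bTransform_mul_infBTransform _ _
  have hZ : Zᴴ * Lᴴ = Zᴴ := by rw [← conjTranspose_mul, bTransform_mul_infBTransform]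
  have hL := differentiableAt_bTransform hβ
  have hLs : DifferentiableAt ℝ (fun q => (bTransform (β q))ᴴ) p := hL.star
  have hD := differentiableAt_fromBlocks hg (differentiableAt_const 0) (differentiableAt_const 0)
    (differentiableAt_transpose (differentiableAt_matrix_inv hg hu))
  calc
    _ = (Y * D + L * cderiv ξ (fun q => fromBlocks (g q) 0 0 (g q)⁻¹ᵀ) p) * Lᴴ
          + L * D * Zᴴ := by
        rw [cderiv_congr ξ (hherm.mono fun q hq => genMetric_eq_bTransform_mul (β q) hq),
          cderiv_mul ξ (hL.fun_mul hD) hLs, cderiv_mul ξ hL hD, cderiv_conjTranspose,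
          cderiv_bTransform ξ hβ, cderiv_bTransform _ hβ]
    _ = L * (cderiv ξ (fun q => fromBlocks (g q) 0 0 (g q)⁻¹ᵀ) p + Y * D + D * Zᴴ) * Lᴴ := by
        nth_rewrite 1 [← hY, ← hZ]
        noncomm_ring
    _ = L * genConnection ξ g β p * (bTransform (-β p) * L) * D * Lᴴ := by
        rw [cderiv_fromBlocks_diagonal_add ξ hg hu, genConnection, bTransform_neg_mul_bTransform]
        noncomm_ring
    _ = _ := by
        rw [genMetric_eq_bTransform_mul _ hherm.self_of_nhds]
        noncomm_ring

lemma chernForm_genMetric (hg : DifferentiableAt ℝ g p) (hβ : DifferentiableAt ℝ β p)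
    (hherm : ∀ᶠ q in 𝓝 p, (g q).IsHermitian) (hu : IsUnit (g p)) :
    chernForm ξ (fun q => genMetric (g q) (β q)) p =
      bTransform (β p) * genConnection ξ g β p * bTransform (-β p) := by
  rw [chernForm, cderiv_genMetric ξ hg hβ hherm hu, mul_nonsing_inv_cancel_right _ _
    ((isUnit_iff_isUnit_det _).1 (isUnit_genMetric _ hherm.self_of_nhds hu))]

lemma differentiableAt_genConnection (hg : ContDiffAt ℝ 2 g p) (hβ : ContDiffAt ℝ 2 β p)
    (hu : IsUnit (g p)) : DifferentiableAt ℝ (genConnection ξ g β) p := by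
  have hinv := differentiableAt_matrix_inv (hg.differentiableAt two_ne_zero) hu
  have hθ := differentiableAt_chernForm ξ hg hu
  exact differentiableAt_fromBlocks hθ (differentiableAt_cderiv ξ hβ)
    (((differentiableAt_transpose hinv).mul (differentiableAt_cderiv _ hβ).star).mul hinv)
    (differentiableAt_transpose hθ).neg

lemma cderiv_genConnection (hg : ContDiffAt ℝ 2 g p) (hβ : ContDiffAt ℝ 2 β p)
    (hherm : ∀ᶠ q in 𝓝 p, (g q).IsHermitian) (hu : IsUnit (g p)) :
    cderiv η (genConnection ξ g β) p =
      genEndo (g p) (-(chernCurvature ξ η g p * (g p)⁻¹)) (cderiv η (cderiv ξ β) p)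
        (covDeriv (conjVec η) g (cderiv (conjVec ξ) β) p) := by
  have hgd := hg.differentiableAt two_ne_zero
  have hinv := differentiableAt_matrix_inv hgd hu
  have hθ := differentiableAt_chernForm ξ hg hu
  have hβ' := differentiableAt_cderiv (conjVec ξ) hβ
  have hraise : DifferentiableAt ℝ
      (fun q => (g q)⁻¹ᵀ * (cderiv (conjVec ξ) β q)ᴴ * (g q)⁻¹) p :=
    ((differentiableAt_transpose hinv).mul hβ'.star).mul hinv
  have hdual : DifferentiableAt ℝ (fun q => -(chernForm ξ g q)ᵀ) p :=
    (differentiableAt_transpose hθ).neg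
  have hblocks := cderiv_fromBlocks η hθ (differentiableAt_cderiv ξ hβ) hraise hdual
  rwa [cderiv_raise η hgd hu hherm hβ', cderiv_neg, cderiv_transpose η hθ,
    cderiv_chernForm ξ η hg hu] at hblocks

lemma cderiv_genConnection_add_commutator (hg : ContDiffAt ℝ 2 g p) (hβ : ContDiffAt ℝ 2 β p)
    (hherm : ∀ᶠ q in 𝓝 p, (g q).IsHermitian) (hu : IsUnit (g p))
    (hskew : ∀ᶠ q in 𝓝 p, (β q)ᵀ = -β q) :
    cderiv η (genConnection ξ g β) p + infBTransform (cderiv η β p) * genConnection ξ g β p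
      - genConnection ξ g β p * infBTransform (cderiv η β p) = genCurvature ξ η g β p := by
  have hβd := hβ.differentiableAt two_ne_zero
  have hY := cderiv_transpose_eq_neg η hβd hskew
  have hZ : (cderiv (conjVec ξ) β p)ᴴᵀ = -(cderiv (conjVec ξ) β p)ᴴ := by
    rw [← conjTranspose_neg, ← cderiv_transpose_eq_neg _ hβd hskew]
    rfl
  rw [cderiv_genConnection ξ η hg hβ hherm hu, cderiv_comm η ξ hβ, genConnection, genCurvature]
  simp only [genEndo, infBTransform, fromBlocks_multiply, fromBlocks_add, fromBlocks_neg, covDeriv,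
    sub_eq_add_neg, zero_mul, mul_zero, add_zero, zero_add, neg_zero, transpose_add, transpose_mul,
    transpose_neg, transpose_transpose, hY, hZ]
  congr 1 <;> noncomm_ring

lemma chernCurvature_genMetric (hg : ContDiffAt ℝ 2 g p) (hβ : ContDiffAt ℝ 2 β p)
    (hherm : ∀ᶠ q in 𝓝 p, (g q).IsHermitian) (hu : IsUnit (g p))
    (hskew : ∀ᶠ q in 𝓝 p, (β q)ᵀ = -β q) :
    chernCurvature ξ η (fun q => genMetric (g q) (β q)) p =
      -(bTransform (β p) * genCurvature ξ η g β p * bTransform (-β p)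
        * genMetric (g p) (β p)) := by
  have hform : chernForm ξ (fun q => genMetric (g q) (β q)) =ᶠ[𝓝 p]
      fun q => bTransform (β q) * genConnection ξ g β q * bTransform (-β q) := by
    filter_upwards [hg.eventually (by simp), hβ.eventually (by simp), hherm.eventually_nhds,
      eventually_isUnit hg.continuousAt hu] with q hgq hβq hhermq huq
    exact chernForm_genMetric ξ (hgq.differentiableAt two_ne_zero)
      (hβq.differentiableAt two_ne_zero) hhermq huq
  rw [chernCurvature_eq_neg_cderiv_chernForm_mul ξ η (contDiffAt_genMetric hg hβ hu)
    (isUnit_genMetric _ hherm.self_of_nhds hu), cderiv_congr η hform,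
    cderiv_bTransform_conj η (hβ.differentiableAt two_ne_zero)
      (differentiableAt_genConnection ξ hg hβ hu),
    cderiv_genConnection_add_commutator ξ η hg hβ hherm hu hskew]

end GeneralizedMetric

section MetricTrace

variable {ι m : Type*} [Fintype ι] [DecidableEq ι]
variable {V W : Type*} [AddCommGroup V] [Module ℂ V] [AddCommGroup W] [Module ℂ W]

/-- The trace `Σ g^{j̄i} M_{ij̄}` of a family `M` with respect to the metric `g`. -/
def metricTrace (g : Matrix ι ι ℂ) (M : ι → ι → V) : V :=
  ∑ i, ∑ j, g⁻¹ j i • M i j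

lemma map_metricTrace (f : V →ₗ[ℂ] W) (g : Matrix ι ι ℂ) (M : ι → ι → V) :
    f (metricTrace g M) = metricTrace g fun i j => f (M i j) := by
  simp [metricTrace]

lemma metricTrace_neg (g : Matrix ι ι ℂ) (M : ι → ι → V) :
    metricTrace g (fun i j => -M i j) = -metricTrace g M := by
  simp [metricTrace]

lemma metricTrace_sub (g : Matrix ι ι ℂ) (M N : ι → ι → V) :
    metricTrace g (fun i j => M i j - N i j) = metricTrace g M - metricTrace g N := by
  simp [metricTrace, smul_sub]

lemma metricTrace_apply (g : Matrix ι ι ℂ) (M : ι → ι → Matrix m m ℂ) (a b : m) :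
    metricTrace g M a b = metricTrace g fun i j => M i j a b :=
  map_metricTrace (Matrix.entryLinearMap ℂ ℂ a b) g M

lemma metricTrace_fromBlocks (g : Matrix ι ι ℂ) (A B C D : ι → ι → Matrix m m ℂ) :
    metricTrace g (fun i j => fromBlocks (A i j) (B i j) (C i j) (D i j)) =
      fromBlocks (metricTrace g A) (metricTrace g B) (metricTrace g C) (metricTrace g D) := by
  ext (a | a) (b | b) <;> simp [metricTrace_apply]

lemma metricTrace_transpose (g : Matrix ι ι ℂ) (M : ι → ι → Matrix m m ℂ) :
    (metricTrace g M)ᵀ = metricTrace g fun i j => (M i j)ᵀ :=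
  map_metricTrace (transposeLinearEquiv m m ℂ ℂ).toLinearMap g M

lemma metricTrace_conjTranspose {g : Matrix ι ι ℂ} (hg : g.IsHermitian)
    (M : ι → ι → Matrix m m ℂ) : (metricTrace g M)ᴴ = metricTrace g fun i j => (M j i)ᴴ := by
  simp only [metricTrace, conjTranspose_sum, conjTranspose_smul, hg.inv.apply]
  exact Finset.sum_comm

variable [Fintype m]

lemma mul_metricTrace_mul (g : Matrix ι ι ℂ) (A B : Matrix m m ℂ) (M : ι → ι → Matrix m m ℂ) :
    A * metricTrace g M * B = metricTrace g fun i j => A * M i j * B := by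
  simp [metricTrace, Finset.mul_sum, Finset.sum_mul]

lemma metricTrace_genEndo {n : ℕ} {g : Matrix (Fin n) (Fin n) ℂ} (hg : g.IsHermitian)
    (X Y : Fin n → Fin n → Matrix (Fin n) (Fin n) ℂ) :
    metricTrace g (fun i j => genEndo g (X i j) (Y i j) (Y j i)) =
      genEndo g (metricTrace g X) (metricTrace g Y) (metricTrace g Y) := by
  simp only [genEndo]
  rw [metricTrace_fromBlocks, metricTrace_conjTranspose hg, mul_metricTrace_mul,
    metricTrace_transpose, metricTrace_neg]

end MetricTrace

section Flow

open scoped Topology Matrix.Norms.L2Operator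

variable {E : Type*} [NormedAddCommGroup E] [NormedSpace ℝ E] {p : E} {n : ℕ}
  {g β : E → Matrix (Fin n) (Fin n) ℂ} {τ : E × E} (ξ : Fin n → E × E)

lemma metricTrace_genCurvature (hherm : (g p).IsHermitian) (hτ : conjVec τ = τ)
    (hflowg : cderiv τ g p = metricTrace (g p) fun i j =>
      cderiv (conjVec (ξ j)) β p * (g p)⁻¹ᵀ * (cderiv (conjVec (ξ i)) β p)ᴴ
        - chernCurvature (ξ i) (conjVec (ξ j)) g p)
    (hflowβ : cderiv τ β p = metricTrace (g p) fun i j =>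
      covDeriv (ξ i) g (cderiv (conjVec (ξ j)) β) p) :
    metricTrace (g p) (fun i j => genCurvature (ξ i) (conjVec (ξ j)) g β p) =
      genConnection τ g β p := by
  have hθ : chernForm τ g p = metricTrace (g p) fun i j =>
      (cderiv (conjVec (ξ j)) β p * (g p)⁻¹ᵀ * (cderiv (conjVec (ξ i)) β p)ᴴ
        - chernCurvature (ξ i) (conjVec (ξ j)) g p) * (g p)⁻¹ := by
    rw [chernForm, hflowg]
    simpa only [one_mul] using mul_metricTrace_mul (g p) 1 (g p)⁻¹ _
  rw [genConnection, hτ, hθ, hflowβ, ← metricTrace_genEndo hherm]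
  simp only [genCurvature, conjVec_conjVec]

theorem cderiv_genMetric_eq_neg_metricTrace (hg : ContDiffAt ℝ 2 g p) (hβ : ContDiffAt ℝ 2 β p)
    (hherm : ∀ᶠ q in 𝓝 p, (g q).IsHermitian) (hu : IsUnit (g p))
    (hskew : ∀ᶠ q in 𝓝 p, (β q)ᵀ = -β q) (hτ : conjVec τ = τ)
    (hflowg : cderiv τ g p = metricTrace (g p) fun i j =>
      cderiv (conjVec (ξ j)) β p * (g p)⁻¹ᵀ * (cderiv (conjVec (ξ i)) β p)ᴴ
        - chernCurvature (ξ i) (conjVec (ξ j)) g p)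
    (hflowβ : cderiv τ β p = metricTrace (g p) fun i j =>
      covDeriv (ξ i) g (cderiv (conjVec (ξ j)) β) p) :
    cderiv τ (fun q => genMetric (g q) (β q)) p = -metricTrace (g p) fun i j =>
      chernCurvature (ξ i) (conjVec (ξ j)) (fun q => genMetric (g q) (β q)) p := by
  simp only [chernCurvature_genMetric _ _ hg hβ hherm hu hskew]
  rw [cderiv_genMetric τ (hg.differentiableAt two_ne_zero) (hβ.differentiableAt two_ne_zero) hherm
      hu, ← metricTrace_genCurvature ξ hherm.self_of_nhds hτ hflowg hflowβ, metricTrace_neg,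
    neg_neg, mul_assoc _ _ (genMetric (g p) (β p)), mul_metricTrace_mul]
  simp only [mul_assoc]

end Flow

section Coordinates

open scoped Topology Matrix.Norms.L2Operator

variable {n : ℕ} {p : ℝ × (Fin n → ℂ)}

/-- The complexified tangent vector `∂ᵢ = ½(∂/∂xᵢ - i·∂/∂yᵢ)`; `∂_{ī}` is its conjugate. -/
def wirtingerVec (i : Fin n) : (ℝ × (Fin n → ℂ)) × (ℝ × (Fin n → ℂ)) :=
  ((2⁻¹ : ℝ) • (0, Pi.single i 1), -((2⁻¹ : ℝ) • (0, Pi.single i Complex.I)))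

/-- The complexified tangent vector `∂ₜ`. -/
def timeVec : (ℝ × (Fin n → ℂ)) × (ℝ × (Fin n → ℂ)) :=
  ((1, 0), 0)

lemma conjVec_timeVec : conjVec (timeVec (n := n)) = timeVec := by
  simp [conjVec, timeVec]

lemma wdP_eq_cderiv (i : Fin n) : wdP i = cderiv (V := ℂ) (wirtingerVec i) := by
  ext f p
  simp only [wdP, cderiv, wirtingerVec, map_neg, map_smul, Complex.real_smul, smul_eq_mul,
    Complex.ofReal_inv, Complex.ofReal_ofNat]
  ring

lemma wdbP_eq_cderiv (i : Fin n) : wdbP i = cderiv (V := ℂ) (conjVec (wirtingerVec i)) := by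
  ext f p
  simp only [wdbP, cderiv, conjVec, wirtingerVec, neg_neg, map_smul, Complex.real_smul, smul_eq_mul,
    Complex.ofReal_inv, Complex.ofReal_ofNat]
  ring

lemma dtP_eq_cderiv : dtP (n := n) = cderiv timeVec := by
  ext f p
  simp [dtP, cderiv, timeVec]

lemma chernP_eq_chernCurvature {ι : Type*} [Fintype ι] [DecidableEq ι]
    {h : ℝ × (Fin n → ℂ) → Matrix ι ι ℂ} (hh : ContDiffAt ℝ 2 h p) (i j : Fin n) (a b : ι) :
    chernP h i j a b p = chernCurvature (wirtingerVec i) (conjVec (wirtingerVec j)) h p a b := by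
  simp only [chernP, chernCurvature, wdP_eq_cderiv, wdbP_eq_cderiv, Matrix.add_apply,
    Matrix.neg_apply, mul_apply, Finset.sum_mul, cderiv_cderiv_matrix_apply _ _ hh,
    cderiv_matrix_apply _ (hh.differentiableAt two_ne_zero)]
  rw [Finset.sum_comm]

lemma traceChernP_eq_metricTrace {ι : Type*} [Fintype ι] [DecidableEq ι]
    (g : ℝ × (Fin n → ℂ) → Matrix (Fin n) (Fin n) ℂ) {h : ℝ × (Fin n → ℂ) → Matrix ι ι ℂ}
    (hh : ContDiffAt ℝ 2 h p) (a b : ι) :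
    traceChernP g h a b p = metricTrace (g p)
      (fun i j => chernCurvature (wirtingerVec i) (conjVec (wirtingerVec j)) h p) a b := by
  rw [metricTrace_apply]
  simp only [traceChernP, metricTrace, chernP_eq_chernCurvature hh, smul_eq_mul]

variable {g β : ℝ × (Fin n → ℂ) → Matrix (Fin n) (Fin n) ℂ}

lemma nabla2betaP_eq_covDeriv (hg : DifferentiableAt ℝ g p) (hβ : ContDiffAt ℝ 2 β p)
    (i j a b : Fin n) : nabla2betaP g β i j a b p =
      covDeriv (wirtingerVec i) g (cderiv (conjVec (wirtingerVec j)) β) p a b := by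
  simp only [nabla2betaP, covDeriv, chernForm, wdP_eq_cderiv, wdbP_eq_cderiv, Matrix.sub_apply,
    mul_apply, transpose_apply, Finset.sum_mul, Finset.mul_sum, cderiv_cderiv_matrix_apply _ _ hβ,
    cderiv_matrix_apply _ hg, cderiv_matrix_apply _ (hβ.differentiableAt two_ne_zero)]
  refine congrArg₂ _ (congrArg _ ?_) ?_
  all_goals
    rw [Finset.sum_comm]
    refine Finset.sum_congr rfl fun _ _ => Finset.sum_congr rfl fun _ _ => ?_
    ring

lemma lapBetaP_eq_metricTrace (hg : DifferentiableAt ℝ g p) (hβ : ContDiffAt ℝ 2 β p)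
    (a b : Fin n) : lapBetaP g β a b p = metricTrace (g p)
      (fun i j => covDeriv (wirtingerVec i) g (cderiv (conjVec (wirtingerVec j)) β) p) a b := by
  rw [metricTrace_apply]
  simp only [lapBetaP, metricTrace, nabla2betaP_eq_covDeriv hg hβ, smul_eq_mul]

lemma sum_sum_comm_sum_sum {α β γ δ R : Type*} [Fintype α] [Fintype β] [Fintype γ] [Fintype δ]
    [AddCommMonoid R] (f : α → β → γ → δ → R) :
    ∑ a, ∑ b, ∑ c, ∑ d, f a b c d = ∑ c, ∑ d, ∑ a, ∑ b, f a b c d := by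
  simpa only [Fintype.sum_prod_type] using Finset.sum_comm (s := Finset.univ) (t := Finset.univ)
    (f := fun (x : α × β) (y : γ × δ) => f x.1 x.2 y.1 y.2)

lemma torsionSqP_eq_metricTrace (hβ : DifferentiableAt ℝ β p)
    (hpot : ∀ i j k, wdbP k (fun q => β q i j) p = torsionP g i j k p) (a b : Fin n) :
    torsionSqP g a b p = metricTrace (g p) (fun i j =>
      cderiv (conjVec (wirtingerVec j)) β p * (g p)⁻¹ᵀ
        * (cderiv (conjVec (wirtingerVec i)) β p)ᴴ) a b := by
  have hT (i j k) : torsionP g i j k p = cderiv (conjVec (wirtingerVec k)) β p i j := by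
    rw [← hpot, wdbP_eq_cderiv, cderiv_matrix_apply _ hβ]
  rw [metricTrace_apply]
  simp only [torsionSqP, metricTrace, hT, smul_eq_mul, mul_apply, transpose_apply,
    conjTranspose_apply, Finset.sum_mul, Finset.mul_sum]
  rw [sum_sum_comm_sum_sum]
  refine Finset.sum_congr rfl fun _ _ => Finset.sum_congr rfl fun _ _ =>
    Finset.sum_congr rfl fun _ _ => Finset.sum_congr rfl fun _ _ => ?_
  simp only [starRingEnd_apply]
  ring

end Coordinates

open scoped Topology Matrix.Norms.L2Operator in
theorem genMetric_evolution_general {n : ℕ} {p : ℝ × (Fin n → ℂ)}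
    {g β : ℝ × (Fin n → ℂ) → Matrix (Fin n) (Fin n) ℂ}
    (hgC : ∀ a b, ContDiffAt ℝ 2 (fun q => g q a b) p)
    (hβC : ∀ a b, ContDiffAt ℝ 2 (fun q => β q a b) p)
    (hherm : ∀ᶠ q in 𝓝 p, (g q).IsHermitian) (hu : IsUnit (g p))
    (hskew : ∀ᶠ q in 𝓝 p, (β q)ᵀ = -β q)
    (hpot : ∀ i j k, wdbP k (fun q => β q i j) p = torsionP g i j k p)
    (hflowg : ∀ i j, dtP (fun q => g q i j) p = -traceChernP g g i j p + torsionSqP g i j p)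
    (hflowβ : ∀ i j, dtP (fun q => β q i j) p = lapBetaP g β i j p) (A B : Fin n ⊕ Fin n) :
    dtP (fun q => genMetric (g q) (β q) A B) p =
      -traceChernP g (fun q => genMetric (g q) (β q)) A B p := by
  have hg := contDiffAt_matrix_iff.2 hgC
  have hβ := contDiffAt_matrix_iff.2 hβC
  have hgd := hg.differentiableAt two_ne_zero
  have hβd := hβ.differentiableAt two_ne_zero
  have hG := contDiffAt_genMetric hg hβ hu
  rw [dtP_eq_cderiv, ← cderiv_matrix_apply timeVec (hG.differentiableAt two_ne_zero),
    traceChernP_eq_metricTrace g hG, cderiv_genMetric_eq_neg_metricTrace wirtingerVec hg hβ hherm hu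
      hskew conjVec_timeVec ?metricFlow ?torsionPotentialFlow, Matrix.neg_apply]
  case metricFlow =>
    ext i j
    rw [cderiv_matrix_apply timeVec hgd, ← dtP_eq_cderiv, hflowg, traceChernP_eq_metricTrace g hg,
      torsionSqP_eq_metricTrace hβd hpot, metricTrace_sub, Matrix.sub_apply, neg_add_eq_sub]
  case torsionPotentialFlow =>
    ext i j
    rw [cderiv_matrix_apply timeVec hβd, ← dtP_eq_cderiv, hflowβ, lapBetaP_eq_metricTrace hgd hβ]

/-- under pluriclosed flow (`∂ₜg = −S^g + T²`, `∂ₜβ = Δ_gβ`, with `β` a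
torsion potential for `g`), the generalized metric evolves by `∂ₜG_{AB̄} = −S_{AB̄}`. -/
theorem genMetric_evolution {n : ℕ} (hn : 0 < n)
    (I : Set ℝ) (hI : IsOpen I) (U : Set (Fin n → ℂ)) (hU : IsOpen U)
    (g β : ℝ × (Fin n → ℂ) → Matrix (Fin n) (Fin n) ℂ)
    (hgC : ∀ a b : Fin n, ContDiffOn ℝ (⊤ : ℕ∞) (fun q => g q a b) (I ×ˢ U))
    (hβC : ∀ a b : Fin n, ContDiffOn ℝ (⊤ : ℕ∞) (fun q => β q a b) (I ×ˢ U))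
    (hg : ∀ p ∈ I ×ˢ U, (g p).PosDef)
    (hβ : ∀ p ∈ I ×ˢ U, (β p)ᵀ = -(β p))
    (hpot : ∀ p ∈ I ×ˢ U, ∀ i j k : Fin n, wdbP k (fun q => β q i j) p = torsionP g i j k p)
    (hflowg : ∀ p ∈ I ×ˢ U, ∀ i j : Fin n,
      dtP (fun q => g q i j) p = - traceChernP g g i j p + torsionSqP g i j p)
    (hflowβ : ∀ p ∈ I ×ˢ U, ∀ i j : Fin n,
      dtP (fun q => β q i j) p = lapBetaP g β i j p) :
    ∀ p ∈ I ×ˢ U, ∀ A B : Fin n ⊕ Fin n,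
      dtP (fun q => genMetric (g q) (β q) A B) p =
        - traceChernP g (fun q => genMetric (g q) (β q)) A B p := by
  intro p hp
  have hnhds : I ×ˢ U ∈ nhds p := (hI.prod hU).mem_nhds hp
  exact genMetric_evolution_general
    (fun a b => ((hgC a b).contDiffAt hnhds).of_le ENat.LEInfty.out)
    (fun a b => ((hβC a b).contDiffAt hnhds).of_le ENat.LEInfty.out)
    (Filter.eventually_of_mem hnhds fun q hq => (hg q hq).isHermitian) (hg p hp).isUnit
    (Filter.eventually_of_mem hnhds hβ) (hpot p hp) (hflowg p hp) (hflowβ p hp)
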